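/- Let α be a partition with all parts at least 2, let p = (p_1,…,p_{ℓ(α)−1},0) be the overlapping partition of the monotone ribbon R_α^p, and let ν be a partition of |α|. Then the Littlewood–Richardson coefficient c_{R_α^p}^ν is positive — i.e. there exists an LR tableau of shape R_α^p and content ν — if and only if ν lies in the dominance-order interval [α, (|α|−p_1, p_1)] and ν_i ≤ Σ_{q=i}^{ℓ(α)} α_q − p_i for every 1 ≤ i ≤ ℓ(p). -/

import Mathlib

namespace RibbonSupport

/-- A partition: a weakly decreasing list of positive integers. -/
def IsPartition (a : List ℕ) : Prop := a.Pairwise (· ≥ ·) ∧ ∀ x ∈ a, 0 < x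

/-- All parts of the list are at least `m`. -/
def PartsGE (a : List ℕ) (m : ℕ) : Prop := ∀ x ∈ a, m ≤ x

/-- Dominance order `lam ⪯ mu` on partitions of the same size. -/
def DomLE (lam mu : List ℕ) : Prop :=
  lam.sum = mu.sum ∧ ∀ i, (lam.take i).sum ≤ (mu.take i).sum

/-- The number of nonzero parts. -/
def lenp (p : List ℕ) : ℕ := p.countP (fun x => decide (x ≠ 0))

/-- `p` is an overlapping partition for the monotone ribbon with row lengths `a`:
`p` has the same length as `a`, its last entry is `0`, and consecutive entries
decrease by `0` or `1`. -/
def IsOverlapSeq (a p : List ℕ) : Prop :=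
  p.length = a.length ∧ p.getD (a.length - 1) 0 = 0 ∧
    ∀ i, i + 1 < a.length →
      p.getD i 0 = p.getD (i + 1) 0 ∨ p.getD i 0 = p.getD (i + 1) 0 + 1

/-- Rows `i` and `i+1` (0-based, top to bottom) of `R_a^p` overlap
(share exactly one column) exactly when `p_i = p_{i+1} + 1`. -/
def ovOf (p : List ℕ) : ℕ → Bool := fun i => decide (p.getD i 0 = p.getD (i + 1) 0 + 1)

def rowOffset (a : List ℕ) (i : ℕ) : ℕ := (a.take i).sum

/-- `w` is the reading word (rows right-to-left, top to bottom) of a semistandard filling of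
the ribbon with row lengths `a` (top to bottom) in which consecutive rows `i`, `i+1` share
exactly one column when `ov i = true` and no column otherwise.  Semistandardness amounts to:
within each row block the word is weakly decreasing (rows weakly increase left to right), and
at each overlapping gap the word strictly increases (columns strictly increase downwards). -/
def IsRibbonWord (a : List ℕ) (ov : ℕ → Bool) (w : List ℕ) : Prop :=
  w.length = a.sum ∧
  (∀ i j, i < a.length → j + 1 < a.getD i 0 →
    w.getD (rowOffset a i + j + 1) 0 ≤ w.getD (rowOffset a i + j) 0) ∧
  (∀ i, i + 1 < a.length → ov i = true →
    w.getD (rowOffset a (i + 1) - 1) 0 < w.getD (rowOffset a (i + 1)) 0)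

/-- Yamanouchi (lattice) word: each prefix has at least as many letters `j` as `j+1`. -/
def IsYam (w : List ℕ) : Prop := ∀ k j, (w.take k).count (j + 2) ≤ (w.take k).count (j + 1)

/-- The word `w` has content `nu` (and only positive letters). -/
def HasContent (w : List ℕ) (nu : List ℕ) : Prop :=
  (∀ j, w.count (j + 1) = nu.getD j 0) ∧ w.count 0 = 0

/-- There is an LR filling of the ribbon `(a, ov)` with content `nu`. -/
def InSupportOv (a : List ℕ) (ov : ℕ → Bool) (nu : List ℕ) : Prop :=
  ∃ w : List ℕ, IsRibbonWord a ov w ∧ IsYam w ∧ HasContent w nu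

/-- `nu` is in the Schur support of the monotone ribbon `R_a^p`. -/
def InSupport (a p nu : List ℕ) : Prop := InSupportOv a (ovOf p) nu

/-- `nu` is in the Schur support of the connected ribbon `R_a`. -/
def InSupportConn (a nu : List ℕ) : Prop := InSupportOv a (fun _ => true) nu

/-- `nu` belongs to the Schur interval `[a, (|a| - p₁, p₁)]` in dominance order. -/
def InInterval (a p nu : List ℕ) : Prop :=
  DomLE a nu ∧ DomLE nu [a.sum - p.getD 0 0, p.getD 0 0]

/-- The Schur support of `R_a^p`, as a set of partitions. -/
def SupportSet (a p : List ℕ) : Set (List ℕ) := {nu | IsPartition nu ∧ InSupport a p nu}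

/-- The Schur interval of `R_a^p`, as a set of partitions. -/
def IntervalSet (a p : List ℕ) : Set (List ℕ) := {nu | IsPartition nu ∧ InInterval a p nu}

/-- `R_a^p` has full Schur support. -/
def FullSupport (a p : List ℕ) : Prop := SupportSet a p = IntervalSet a p

/-- The Schur support of the connected ribbon `R_a`, as a set of partitions. -/
def SupportSetConn (a : List ℕ) : Set (List ℕ) := {nu | IsPartition nu ∧ InSupportConn a nu}

/-- `ϱ_i` (1-based `i`): `Σ_{q=i+1}^{ℓ(a)} a_q − p_{i+1} + 1`. -/
def rho (a p : List ℕ) (i : ℕ) : ℕ := (a.drop i).sum + 1 - p.getD i 0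

/-- Entry `j` (1-based) of the `i`-witness vector: `[ϱ_i − a_j]₊`. -/
def wit (a p : List ℕ) (i j : ℕ) : ℕ := rho a p i - a.getD (j - 1) 0

/-- Size of the `i`-witness vector. -/
def witSize (a p : List ℕ) (i : ℕ) : ℕ := ∑ j ∈ Finset.Icc 1 i, wit a p i j

/-! ### Tableaux -/

/-- Cells (0-based `(row, column)`) of the Young diagram of `lam`. -/
def cells (lam : List ℕ) : Finset (ℕ × ℕ) :=
  (Finset.range lam.length ×ˢ Finset.range (lam.sum + 1)).filter
    (fun x => x.2 < lam.getD x.1 0)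

/-- `T` is a semistandard Young tableau of shape `lam` and content `al`
(normalized to vanish off the diagram). -/
def IsTab (lam al : List ℕ) (T : ℕ × ℕ → ℕ) : Prop :=
  (∀ x, x ∉ cells lam → T x = 0) ∧
  (∀ x ∈ cells lam, 1 ≤ T x) ∧
  (∀ i c, (i, c + 1) ∈ cells lam → T (i, c) ≤ T (i, c + 1)) ∧
  (∀ i c, (i + 1, c) ∈ cells lam → T (i, c) < T (i + 1, c)) ∧
  (∀ k, ((cells lam).filter (fun x => T x = k + 1)).card = al.getD k 0)

/-- Standardization of a tableau: entries are renumbered `1, …, N` in increasing order of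
value, entries of equal value being numbered from southwest to northeast (by column). -/
def stdz (lam : List ℕ) (T : ℕ × ℕ → ℕ) : ℕ × ℕ → ℕ := fun x =>
  if x ∈ cells lam then
    ((cells lam).filter (fun y => T y < T x ∨ (T y = T x ∧ y.2 < x.2))).card + 1
  else 0

/-- `n` is a descent of the standard tableau `U`: the entry `n+1` lies in a strictly
lower row than the entry `n`. -/
def IsDescent (lam : List ℕ) (U : ℕ × ℕ → ℕ) (n : ℕ) : Prop :=
  ∃ x ∈ cells lam, ∃ y ∈ cells lam, U x = n ∧ U y = n + 1 ∧ x.1 < y.1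

/-- `S(al)`: the set of proper partial sums of the composition `al`. -/
def Sset (al : List ℕ) : Set ℕ := {n | ∃ k, 0 < k ∧ k < al.length ∧ n = (al.take k).sum}

/-- `s ∈ D(T)`: some entry `s+1` of `T` lies in a strictly lower row than some entry `s`. -/
def TabDescent (lam : List ℕ) (T : ℕ × ℕ → ℕ) (s : ℕ) : Prop :=
  ∃ x ∈ cells lam, ∃ y ∈ cells lam, T x = s ∧ T y = s + 1 ∧ x.1 < y.1

/-- The word `w_{T̂}` of `T`: its `u`-th letter (1-based) is the 1-based row index of the
entry `u` of the standardization `T̂` of `T`. -/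
def wordOf (lam : List ℕ) (T : ℕ × ℕ → ℕ) : List ℕ :=
  (List.range lam.sum).map fun n =>
    ∑ x ∈ (cells lam).filter (fun x => stdz lam T x = n + 1), (x.1 + 1)

/-- `j ∈ {2, …, ℓ(al)}` is a critical number of `T ∈ Tab(lam, al)`:
`w_{α_1+⋯+α_{j-1}} = w_{α_1+⋯+α_{j-1}+1}` in the word of `T`. -/
def CriticalNum (lam al : List ℕ) (T : ℕ × ℕ → ℕ) (j : ℕ) : Prop :=
  2 ≤ j ∧ j ≤ al.length ∧
    (wordOf lam T).getD ((al.take (j - 1)).sum - 1) 0 =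
      (wordOf lam T).getD ((al.take (j - 1)).sum) 0

/-- `j ∈ {2, …, ℓ(al)}` is a negligible critical number of `T`:
`w_{α_1+⋯+α_{j-1}} > w_{α_1+⋯+α_{j-1}+1}` in the word of `T`. -/
def NegligibleNum (lam al : List ℕ) (T : ℕ × ℕ → ℕ) (j : ℕ) : Prop :=
  2 ≤ j ∧ j ≤ al.length ∧
    (wordOf lam T).getD ((al.take (j - 1)).sum) 0 <
      (wordOf lam T).getD ((al.take (j - 1)).sum - 1) 0

/-- The overlapping partition of the ribbon encoded by its gap pattern `b`
(`b j = true` iff rows `j` and `j+1`, 0-based, overlap). -/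
def povOf (b : List Bool) : List ℕ :=
  (List.range (b.length + 1)).map fun i => (b.drop i).count true

/-! ### Connected ribbons with rows in arbitrary order -/

/-- Starting column (0-based) of row `i` of the connected ribbon with row lengths `b`. -/
def startConn (b : List ℕ) (i : ℕ) : ℕ := (b.drop (i + 1)).sum + (i + 1) - b.length

/-- Number of columns of the connected ribbon with row lengths `b`. -/
def ncols (b : List ℕ) : ℕ := b.sum + 1 - b.length

/-- Length of column `c` of the connected ribbon with row lengths `b`. -/
def colLen (b : List ℕ) (c : ℕ) : ℕ :=
  ((Finset.range b.length).filter
    (fun i => startConn b i ≤ c ∧ c < startConn b i + b.getD i 0)).card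

/-- Deletion rank of row `j`: the number of rows deleted strictly before row `j` when one
repeatedly deletes a longest remaining row in highest (most northern) position. -/
def delRank (g : List ℕ) (j : ℕ) : ℕ :=
  ((Finset.range g.length).filter
    (fun j' => g.getD j 0 < g.getD j' 0 ∨ (g.getD j' 0 = g.getD j 0 ∧ j' < j))).card

/-- The overlapping partition of the connected ribbon with row lengths `g`:
its `(d+1)`-st entry is the number of length-two columns of the ribbon remaining
after deleting `d` rows as above, i.e. the number of adjacent pairs of surviving rows. -/
def ppiList (g : List ℕ) : List ℕ :=
  (List.range g.length).map fun d =>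
    ((Finset.range (g.length - 1)).filter
      (fun j => d ≤ delRank g j ∧ d ≤ delRank g (j + 1))).card

/-!
Build the reading word of an LR filling one row at a time. Appending a last row changes the content
by a horizontal strip, and the lattice condition constrains nothing else; at an overlap the last
letter of the upper row must be smaller than the first letter of the lower one.

Necessity: a ribbon with `l` rows only uses the letters `1, …, l`. The row bounds follow by
induction on the rows, strengthened by one unit when the last letter of the word is not the letter
counted, since the two letters at an overlap are not both equal to it.

Sufficiency: remove the last row. The bounds for the shorter ribbon force a least number of each
letter into the removed row, and at most one letter other than the largest is really forced, because
the removed row is the shortest. Choosing the row greedily within these limits gives the strip. It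
has to contain the largest letter of the content wherever the row overlaps the previous one, and the
previous row has to end in a smaller letter. So the induction also shows that the last letter can be
taken smaller than the largest letter whenever the multiplicity of the latter could be increased.
-/

/-! ### Removing the last row -/

section

open Finset

/-- Letters to be removed are chosen greedily: the partial sums of the solution are the smallest
ones compatible with both bounds. -/
theorem exists_mem_Icc_sum_eq_prefix_le {lo hi D : ℕ → ℕ} {N m : ℕ}
    (hle : ∀ i < N, lo i ≤ hi i) (hlo : ∑ i ∈ range N, lo i ≤ m) (hhi : m ≤ ∑ i ∈ range N, hi i)
    (hloD : ∀ k < N, ∑ i ∈ range k, lo i ≤ D k) (hhiD : ∀ k < N, m ≤ D k + ∑ i ∈ Ico k N, hi i) :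
    ∃ ρ : ℕ → ℕ, (∀ i < N, lo i ≤ ρ i ∧ ρ i ≤ hi i) ∧ ∑ i ∈ range N, ρ i = m ∧
      ∀ k < N, ∑ i ∈ range k, ρ i ≤ D k := by
  set R : ℕ → ℕ := fun k => max (∑ i ∈ range k, lo i) (m - ∑ i ∈ Ico k N, hi i) with hR
  have hstep : ∀ k < N, R k + lo k ≤ R (k + 1) ∧ R (k + 1) ≤ R k + hi k := fun k hk => by
    have := sum_eq_sum_Ico_succ_bot hk hi
    have := sum_range_succ lo k
    have := hle k hk
    simp only [hR]
    omega
  have hsum : ∀ k ≤ N, ∑ i ∈ range k, (R (i + 1) - R i) = R k := fun k hk => by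
    induction k with
    | zero => simp [hR, Nat.sub_eq_zero_of_le hhi]
    | succ k ih =>
      have := hstep k hk
      rw [sum_range_succ, ih (by omega)]
      omega
  refine ⟨fun i => R (i + 1) - R i, fun i hi => ?_, ?_, fun k hk => ?_⟩
  · have := hstep i hi
    dsimp only
    omega
  · rw [hsum N le_rfl]
    simpa [hR] using hlo
  · have := hhiD k hk
    have := hloD k hk
    rw [hsum k hk.le]
    simp only [hR]
    omega

theorem sum_le_of_forall_eq_zero_or {ι : Type*} {s : Finset ι} {f : ι → ℕ} {B : ℕ}
    (hB : ∀ i ∈ s, f i ≤ B) (hf : ∀ i ∈ s, ∀ j ∈ s, i ≠ j → f i = 0 ∨ f j = 0) :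
    ∑ i ∈ s, f i ≤ B := by
  by_cases h : ∃ i ∈ s, f i ≠ 0
  · obtain ⟨i, hi, hfi⟩ := h
    rw [sum_eq_single_of_mem i hi fun j hj hji => (hf j hj i hi hji).resolve_right hfi]
    exact hB i hi
  · push Not at h
    simp [sum_eq_zero h]

theorem sum_Ico_tsub_succ_add {f : ℕ → ℕ} (hf : Antitone f) {k n : ℕ} (hkn : k ≤ n) :
    ∑ i ∈ Ico k n, (f i - f (i + 1)) + f n = f k := by
  induction n, hkn using Nat.le_induction with
  | base => simp
  | succ n hkn ih =>
    have : f (n + 1) ≤ f n := hf n.le_succ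
    rw [sum_Ico_succ_top hkn]
    omega

theorem mul_sub_le_sum_Ico {f : ℕ → ℕ} {c i j : ℕ} (h : ∀ k, i ≤ k → k < j → c ≤ f k) :
    c * (j - i) ≤ ∑ k ∈ Ico i j, f k := by
  simpa [mul_comm] using
    card_nsmul_le_sum (Ico i j) f c fun k hk => h k (mem_Ico.1 hk).1 (mem_Ico.1 hk).2

/-- The number of overlaps among the gaps `i, …, l - 1`, where gap `j` separates rows `j` and
`j + 1`. The entry `p_{i+1}` of the overlapping partition of a ribbon with `l + 1` rows is
`overlaps ov i l`. -/
def overlaps (ov : ℕ → Bool) (i l : ℕ) : ℕ := #{j ∈ Ico i l | ov j = true}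

variable {ov : ℕ → Bool}

theorem overlaps_le (i l : ℕ) : overlaps ov i l ≤ l - i :=
  (card_filter_le _ _).trans_eq (Nat.card_Ico i l)

theorem overlaps_of_le {i l : ℕ} (h : l ≤ i) : overlaps ov i l = 0 := by
  simp [overlaps, Ico_eq_empty_of_le h]

theorem overlaps_mono (i : ℕ) : Monotone (overlaps ov i) := fun _ _ h =>
  card_le_card (filter_subset_filter _ (Ico_subset_Ico_right h))

theorem overlaps_add {i j l : ℕ} (hij : i ≤ j) (hjl : j ≤ l) :
    overlaps ov i j + overlaps ov j l = overlaps ov i l := by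
  simp only [overlaps, card_filter, sum_Ico_consecutive _ hij hjl]

theorem overlaps_pred (l : ℕ) :
    overlaps ov (l - 1) l = if 0 < l ∧ ov (l - 1) = true then 1 else 0 := by
  cases l with
  | zero => simp [overlaps]
  | succ l => cases h : ov l <;> simp [overlaps, filter_singleton, h]

/-- The right-hand side of the theorem for a ribbon with `l` rows of lengths `α 0, …, α (l - 1)`
and contents `ν`, both read as functions on row indices. The upper end of the dominance interval is
the case `i = 0` of `bound`. -/
structure IsAdmissible (α : ℕ → ℕ) (ov : ℕ → Bool) (l : ℕ) (ν : ℕ → ℕ) : Prop where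
  antitone : Antitone ν
  sum_eq : ∑ i ∈ range l, ν i = ∑ i ∈ range l, α i
  dominates : ∀ k ≤ l, ∑ i ∈ range k, α i ≤ ∑ i ∈ range k, ν i
  bound : ∀ i, ν i + overlaps ov i (l - 1) ≤ ∑ j ∈ Ico i l, α j

/-- `n` is the index of the last nonzero part of the partition `ν`. -/
def IsLastPart (ν : ℕ → ℕ) (n : ℕ) : Prop := 0 < ν n ∧ ν (n + 1) = 0

theorem IsLastPart.eq_zero {ν : ℕ → ℕ} {n i : ℕ} (hn : IsLastPart ν n) (hν : Antitone ν)
    (hi : n + 1 ≤ i) : ν i = 0 :=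
  Nat.le_zero.1 ((hν hi).trans_eq hn.2)

theorem IsLastPart.eq {ν : ℕ → ℕ} {m n : ℕ} (hm : IsLastPart ν m) (hn : IsLastPart ν n)
    (hν : Antitone ν) : m = n := by
  by_contra hne
  rcases Ne.lt_or_gt hne with h | h
  exacts [hn.1.ne' (hm.eq_zero hν h), hm.1.ne' (hn.eq_zero hν h)]

/-- The last part `ν n` can be increased without violating the bounds on it; then a ribbon with
`l` rows has an LR filling of content `ν` whose last letter is not `n + 1`. -/
def HasSlack (α : ℕ → ℕ) (ov : ℕ → Bool) (l : ℕ) (ν : ℕ → ℕ) (n : ℕ) : Prop :=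
  ν n < ν (n - 1) ∧ ν n + overlaps ov n (l - 1) < ∑ j ∈ Ico n l, α j

variable {α ν : ℕ → ℕ} {l n i j k : ℕ}

theorem IsAdmissible.eq_zero (h : IsAdmissible α ov l ν) (hi : l ≤ i) : ν i = 0 := by
  simpa [Ico_eq_empty_of_le hi] using (Nat.le_add_right _ _).trans (h.bound i)

theorem IsAdmissible.lt_of_pos (h : IsAdmissible α ov l ν) (hi : 0 < ν i) : i < l := by
  by_contra! hli
  exact hi.ne' (h.eq_zero hli)

theorem IsAdmissible.sum_Ico_le (h : IsAdmissible α ov l ν) (hij : i ≤ j) (hjl : j ≤ l) :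
    ∑ k ∈ Ico i j, ν k ≤ ∑ k ∈ Ico i l, α k := by
  have hdom := h.dominates i (hij.trans hjl)
  have htotal := h.sum_eq
  rw [← sum_range_add_sum_Ico ν (hij.trans hjl), ← sum_range_add_sum_Ico α (hij.trans hjl),
    ← sum_Ico_consecutive ν hij hjl] at htotal
  omega

theorem IsAdmissible.add_sub_add_le (h : IsAdmissible α ov l ν) (hij : i < j) (hj : 0 < ν j) :
    ν i + (j - (i + 1)) + ν j ≤ ∑ k ∈ Ico i l, α k := by
  have hjl := h.lt_of_pos hj
  have hle := h.sum_Ico_le (hij.le.trans j.le_succ) hjl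
  rw [Nat.succ_eq_add_one, sum_Ico_succ_top hij.le, sum_eq_sum_Ico_succ_bot hij] at hle
  have : 1 * (j - (i + 1)) ≤ ∑ k ∈ Ico (i + 1) j, ν k :=
    mul_sub_le_sum_Ico fun k _ hk => hj.trans_le (h.antitone hk.le)
  omega

/-- Since `α l` is the smallest part, two parts of `ν` cannot both be too long for the ribbon
without its last row. -/
theorem IsAdmissible.bound_of_lt_of_not_bound (h : IsAdmissible α ov (l + 1) ν)
    (hα : ∀ i < l, α l ≤ α i) (h2 : 2 ≤ α l) (hij : i < j) (hjl : j < l) (hj : 0 < ν j)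
    (hi : ∑ k ∈ Ico i l, α k < ν i + overlaps ov i (l - 1)) :
    ν j + overlaps ov j (l - 1) ≤ ∑ k ∈ Ico j l, α k := by
  have htwo := h.add_sub_add_le hij hj
  rw [sum_Ico_succ_top (by omega)] at htwo
  have hsplit : overlaps ov i j + overlaps ov j (l - 1) = overlaps ov i (l - 1) :=
    overlaps_add hij.le (by omega)
  have := overlaps_le (ov := ov) i j
  have := overlaps_le (ov := ov) j (l - 1)
  have htail : 2 * (l - (j + 1)) ≤ ∑ k ∈ Ico (j + 1) l, α k :=
    mul_sub_le_sum_Ico fun k _ hk => h2.trans (hα k hk)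
  have := sum_eq_sum_Ico_succ_bot hjl α
  have := hα j hjl
  omega

/-- The least number of letters `i + 1` in the last row of an LR filling of content `ν` of a
ribbon with `l + 1` rows, when `i` is not the last part of `ν`. -/
def forcedDrop (α : ℕ → ℕ) (ov : ℕ → Bool) (l : ℕ) (ν : ℕ → ℕ) (i : ℕ) : ℕ :=
  ν i + overlaps ov i (l - 1) - ∑ k ∈ Ico i l, α k

theorem IsAdmissible.forcedDrop_eq_zero_or (h : IsAdmissible α ov (l + 1) ν)
    (hα : ∀ i < l, α l ≤ α i) (h2 : 2 ≤ α l) (hij : i < j) (hjl : j < l) (hj : 0 < ν j) :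
    forcedDrop α ov l ν i = 0 ∨ forcedDrop α ov l ν j = 0 := by
  have := h.bound_of_lt_of_not_bound hα h2 hij hjl hj
  simp only [forcedDrop]
  omega

theorem IsAdmissible.forcedDrop_add_overlaps_le (h : IsAdmissible α ov (l + 1) ν)
    (hl : 0 < α l) (hil : i < l) : forcedDrop α ov l ν i + overlaps ov (l - 1) l ≤ α l := by
  have hbound := h.bound i
  rw [Nat.add_sub_cancel, sum_Ico_succ_top hil.le,
    ← overlaps_add (Nat.le_sub_one_of_lt hil) l.pred_le] at hbound
  have := overlaps_le (ov := ov) (l - 1) l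
  simp only [forcedDrop]
  omega

theorem overlaps_le_sum (h2 : ∀ i < l, 2 ≤ α i) (hkl : k ≤ l) :
    overlaps ov n k ≤ ∑ j ∈ Ico n l, α j := by
  have := overlaps_le (ov := ov) n k
  have : 2 * (l - n) ≤ ∑ k ∈ Ico n l, α k := mul_sub_le_sum_Ico fun k _ hk => h2 k hk
  omega

/-- The numbers of letters `i + 1`, for `i ≤ n`, that the last row must contain at least, where
`n` is the last part of `ν`. If the last row overlaps the one above it, then it contains the letter
`n + 1`, and at least so many of them that the shorter ribbon is left with slack. -/
def minDrop (α : ℕ → ℕ) (ov : ℕ → Bool) (l : ℕ) (ν : ℕ → ℕ) (n i : ℕ) : ℕ :=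
  if i < n then forcedDrop α ov l ν i
  else max (overlaps ov (l - 1) l) (ν n + overlaps ov n l - ∑ k ∈ Ico n l, α k)

instance : Decidable (HasSlack α ov l ν n) := inferInstanceAs (Decidable (_ ∧ _))

/-- The numbers of letters `i + 1`, for `i ≤ n`, that the last row may contain at most, where
`n` is the last part of `ν`. If there is slack, some other letter must be left room for. -/
def maxDrop (α : ℕ → ℕ) (ov : ℕ → Bool) (l : ℕ) (ν : ℕ → ℕ) (n i : ℕ) : ℕ :=
  if i < n then ν i - ν (i + 1)
  else if HasSlack α ov (l + 1) ν n then min (ν n) (α l - 1) else ν n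

theorem minDrop_last : minDrop α ov l ν n n =
    max (overlaps ov (l - 1) l) (ν n + overlaps ov n l - ∑ k ∈ Ico n l, α k) := by
  simp only [minDrop, lt_irrefl, if_false]

theorem maxDrop_last : maxDrop α ov l ν n n =
    if HasSlack α ov (l + 1) ν n then min (ν n) (α l - 1) else ν n := by
  simp only [maxDrop, lt_irrefl, if_false]

theorem forcedDrop_le_minDrop (hi : i ≤ n) : forcedDrop α ov l ν i ≤ minDrop α ov l ν n i := by
  rcases hi.eq_or_lt with rfl | hi
  · have : overlaps ov i (l - 1) ≤ overlaps ov i l := overlaps_mono i (l.sub_le 1)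
    rw [minDrop_last, forcedDrop]
    omega
  · rw [minDrop, if_pos hi]

theorem maxDrop_le (hi : i ≤ n) (hn : ν (n + 1) = 0) :
    maxDrop α ov l ν n i ≤ ν i - ν (i + 1) := by
  rcases hi.eq_or_lt with rfl | hi
  · rw [maxDrop_last, hn]
    split_ifs <;> omega
  · rw [maxDrop, if_pos hi]

theorem IsAdmissible.succ_bound (h : IsAdmissible α ov (l + 1) ν)
    (hα : ∀ i < l, α l ≤ α i) (h2 : 2 ≤ α l) (hi : 0 < ν (i + 1)) :
    ν (i + 1) + overlaps ov i (l - 1) ≤ ∑ k ∈ Ico i l, α k := by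
  have hil := h.lt_of_pos hi
  by_contra! hlt
  have := h.antitone i.le_succ
  rw [Nat.succ_eq_add_one] at this
  rcases (Nat.succ_le_of_lt hil).eq_or_lt with hl | hl
  · obtain rfl : l = i + 1 := by omega
    have hbound := h.bound (i + 1)
    rw [Nat.add_sub_cancel, Nat.Ico_succ_singleton, sum_singleton] at hbound
    rw [Nat.add_sub_cancel, overlaps_of_le le_rfl, Nat.Ico_succ_singleton, sum_singleton] at hlt
    have := hα i (by omega)
    omega
  · have hnext := h.bound_of_lt_of_not_bound hα h2 i.lt_succ_self (by omega) hi
      (hlt.trans_le (by omega))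
    have := overlaps_add (ov := ov) i.le_succ (show i + 1 ≤ l - 1 by omega)
    have := overlaps_le (ov := ov) i (i + 1)
    have := sum_eq_sum_Ico_succ_bot (show i < l by omega) α
    have := hα i (by omega)
    simp only [Nat.succ_eq_add_one] at *
    omega

theorem IsAdmissible.minDrop_le_maxDrop (h : IsAdmissible α ov (l + 1) ν)
    (hα : ∀ i < l, α l ≤ α i) (h2 : 2 ≤ α l) (hn : 0 < ν n) (hi : i ≤ n) :
    minDrop α ov l ν n i ≤ maxDrop α ov l ν n i := by
  rcases hi.eq_or_lt with rfl | hi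
  · have := overlaps_le (ov := ov) (l - 1) l
    have := overlaps_le_sum (ov := ov) (n := i) (fun k hk => h2.trans (hα k hk)) le_rfl
    have hbound := h.bound i
    have hil := h.lt_of_pos hn
    simp only [minDrop_last, maxDrop_last, HasSlack, Nat.add_sub_cancel,
      sum_Ico_succ_top (Nat.le_of_lt_succ hil)] at hbound ⊢
    split_ifs <;> omega
  · have := h.succ_bound hα h2 (hn.trans_le (h.antitone hi))
    have := h.antitone i.le_succ
    simp only [minDrop, maxDrop, forcedDrop, if_pos hi, Nat.succ_eq_add_one] at *
    omega

theorem IsAdmissible.sum_minDrop_le_of_forall (h : IsAdmissible α ov (l + 1) ν)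
    (hα : ∀ i < l, α l ≤ α i) (h2 : 2 ≤ α l) (hn : 0 < ν n) (hk : k ≤ n) {B : ℕ}
    (hB : ∀ i < k, forcedDrop α ov l ν i ≤ B) : ∑ i ∈ range k, minDrop α ov l ν n i ≤ B := by
  have hnl := h.lt_of_pos hn
  refine sum_le_of_forall_eq_zero_or (fun i hi => ?_) fun i hi j hj hij => ?_
  · rw [mem_range] at hi
    simpa only [minDrop, if_pos (hi.trans_le hk)] using hB i hi
  · rw [mem_range] at hi hj
    replace hi := hi.trans_le hk
    replace hj := hj.trans_le hk
    simp only [minDrop, if_pos hi, if_pos hj]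
    rcases hij.lt_or_gt with hij | hij
    · exact h.forcedDrop_eq_zero_or hα h2 hij (by omega) (hn.trans_le (h.antitone hj.le))
    · exact (h.forcedDrop_eq_zero_or hα h2 hij (by omega) (hn.trans_le (h.antitone hi.le))).symm

theorem IsAdmissible.minDrop_last_le (h : IsAdmissible α ov (l + 1) ν) (h2 : 2 ≤ α l)
    (hn : 0 < ν n) : minDrop α ov l ν n n ≤ α l := by
  have hnl := h.lt_of_pos hn
  have hlast : ν n + overlaps ov n l ≤ _ := h.bound n
  have hgap := overlaps_le (ov := ov) (l - 1) l
  rw [sum_Ico_succ_top (by omega)] at hlast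
  rw [minDrop_last]
  omega

theorem IsAdmissible.forcedDrop_add_minDrop_last_le (h : IsAdmissible α ov (l + 1) ν)
    (hα : ∀ i < l, α l ≤ α i) (h2 : 2 ≤ α l) (hn : 0 < ν n) (hi : i < n) :
    forcedDrop α ov l ν i + minDrop α ov l ν n n ≤ α l := by
  have hlast := h.minDrop_last_le h2 hn
  by_cases hzero : forcedDrop α ov l ν i = 0
  · omega
  have hgap := overlaps_le (ov := ov) (l - 1) l
  rcases (Nat.le_of_lt_succ (h.lt_of_pos hn)).eq_or_lt with rfl | hnl
  · have htwo := h.add_sub_add_le hi hn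
    have := overlaps_le (ov := ov) i (n - 1)
    rw [sum_Ico_succ_top hi.le] at htwo
    simp only [forcedDrop, minDrop_last, overlaps_of_le le_rfl, Ico_self, sum_empty] at *
    omega
  · have hbound := h.bound_of_lt_of_not_bound hα h2 hi hnl hn
      (Nat.lt_of_sub_pos (Nat.pos_of_ne_zero hzero))
    have hgap := h.forcedDrop_add_overlaps_le (by omega) (hi.trans hnl)
    have := overlaps_add (ov := ov) (Nat.le_sub_one_of_lt hnl) l.pred_le
    suffices minDrop α ov l ν n n ≤ overlaps ov (l - 1) l by omega
    rw [minDrop_last]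
    omega

theorem IsAdmissible.sum_minDrop_le (h : IsAdmissible α ov (l + 1) ν)
    (hα : ∀ i < l, α l ≤ α i) (h2 : 2 ≤ α l) (hn : 0 < ν n) :
    ∑ i ∈ range (n + 1), minDrop α ov l ν n i ≤ α l := by
  have hlast := h.minDrop_last_le h2 hn
  have := h.sum_minDrop_le_of_forall hα h2 hn le_rfl (B := α l - minDrop α ov l ν n n) fun i hi =>
    Nat.le_sub_of_add_le (h.forcedDrop_add_minDrop_last_le hα h2 hn hi)
  rw [sum_range_succ]
  omega

theorem IsAdmissible.prefix_minDrop_le (h : IsAdmissible α ov (l + 1) ν)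
    (hα : ∀ i < l, α l ≤ α i) (h2 : 2 ≤ α l) (hn : 0 < ν n) (hk : k ≤ n) :
    ∑ i ∈ range k, minDrop α ov l ν n i ≤ ∑ i ∈ range k, ν i - ∑ i ∈ range k, α i := by
  have hnl := h.lt_of_pos hn
  refine h.sum_minDrop_le_of_forall hα h2 hn hk fun i hi => ?_
  have hdom := h.dominates i (by omega)
  have hdom' := h.dominates k (by omega)
  have hmid : 1 * (k - (i + 1)) ≤ ∑ j ∈ Ico (i + 1) k, ν j :=
    mul_sub_le_sum_Ico fun j _ hj => hn.trans_le (h.antitone (hj.le.trans hk))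
  have htail : 2 * (l - k) ≤ ∑ j ∈ Ico k l, α j :=
    mul_sub_le_sum_Ico fun j _ hj => h2.trans (hα j hj)
  have := sum_eq_sum_Ico_succ_bot hi ν
  have := sum_range_add_sum_Ico ν hi.le
  have := sum_range_add_sum_Ico α hi.le
  have := sum_Ico_consecutive α hi.le (show k ≤ l by omega)
  have := overlaps_le (ov := ov) i (l - 1)
  simp only [forcedDrop]
  omega

theorem sum_maxDrop_add (hν : Antitone ν) (hk : k ≤ n) :
    ∑ i ∈ Ico k n, maxDrop α ov l ν n i + ν n = ν k := by
  rw [← sum_Ico_tsub_succ_add hν hk]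
  exact congrArg (· + ν n) (sum_congr rfl fun i hi => if_pos (mem_Ico.1 hi).2)

theorem IsAdmissible.sum_range_last (h : IsAdmissible α ov l ν) (hn : IsLastPart ν n) :
    ∑ i ∈ range n, ν i + ν n = ∑ i ∈ range l, α i := by
  rw [← h.sum_eq, ← sum_range_succ]
  exact (eventually_constant_sum (fun i => hn.eq_zero h.antitone) (h.lt_of_pos hn.1)).symm

theorem IsAdmissible.le_add_sum_maxDrop (h : IsAdmissible α ov (l + 1) ν)
    (hα : ∀ i < l, α l ≤ α i) (hn : IsLastPart ν n) (hk : k ≤ n) :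
    α l ≤ ∑ i ∈ range k, ν i - ∑ i ∈ range k, α i + ∑ i ∈ Ico k (n + 1), maxDrop α ov l ν n i := by
  have hnl := h.lt_of_pos hn.1
  have htel := sum_maxDrop_add (α := α) (ov := ov) (l := l) h.antitone hk
  have hdom := h.dominates k (by omega)
  have hdom' := h.dominates (k + 1) (by omega)
  have hle : α l ≤ α k := by
    rcases (show k ≤ l by omega).eq_or_lt with rfl | hkl
    exacts [le_rfl, hα k hkl]
  rw [sum_range_succ, sum_range_succ] at hdom'
  rw [sum_Ico_succ_top hk, maxDrop_last]
  split_ifs with hslack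
  · rcases hk.eq_or_lt with rfl | hkn
    · have htotal := h.sum_range_last hn
      rw [← sum_range_add_sum_Ico α hnl.le] at htotal
      have := hslack.2
      omega
    · have := h.antitone (Nat.le_sub_one_of_lt hkn)
      have := hslack.1
      omega
  · omega

theorem tsub_add_overlaps_le (h2 : ∀ i < l, 2 ≤ α i) {r : ℕ} (hr : forcedDrop α ov l ν i ≤ r) :
    ν i - r + overlaps ov i (l - 1) ≤ ∑ k ∈ Ico i l, α k := by
  have := overlaps_le_sum (ov := ov) (n := i) h2 (l.sub_le 1)
  rw [forcedDrop] at hr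
  omega

theorem IsAdmissible.tsub {ρ : ℕ → ℕ} (h : IsAdmissible α ov (l + 1) ν) (h2 : ∀ i < l, 2 ≤ α i)
    (hn : IsLastPart ν n) (hρ : ∀ i ≤ n, forcedDrop α ov l ν i ≤ ρ i ∧ ρ i ≤ ν i - ν (i + 1))
    (hsum : ∑ i ∈ range (n + 1), ρ i = α l)
    (hpre : ∀ k ≤ n, ∑ i ∈ range k, ρ i ≤ ∑ i ∈ range k, ν i - ∑ i ∈ range k, α i) :
    IsAdmissible α ov l fun i => ν i - ρ i := by
  have hzero : ∀ i, n + 1 ≤ i → ν i - ρ i = 0 := fun i hi => by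
    rw [hn.eq_zero h.antitone hi, Nat.zero_sub]
  have hbound : ∀ i, ν i - ρ i + overlaps ov i (l - 1) ≤ ∑ k ∈ Ico i l, α k := fun i => by
    rcases le_or_gt i n with hi | hi
    · exact tsub_add_overlaps_le h2 (hρ i hi).1
    · simpa only [hzero i hi, zero_add] using overlaps_le_sum h2 (l.sub_le 1)
  have hsub : ∀ k ≤ n + 1, ∑ i ∈ range k, (ν i - ρ i) = ∑ i ∈ range k, ν i - ∑ i ∈ range k, ρ i :=
    fun k hk => sum_tsub_distrib _ fun i hi =>
      (hρ i (Nat.le_of_lt_succ ((mem_range.1 hi).trans_le hk))).2.trans (Nat.sub_le _ _)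
  have htotal := h.sum_range_last hn
  rw [← sum_range_succ, sum_range_succ α] at htotal
  have htotal' : ∑ i ∈ range (n + 1), (ν i - ρ i) = ∑ i ∈ range l, α i := by
    have := hsub (n + 1) le_rfl
    omega
  refine ⟨antitone_nat_of_succ_le fun i => ?_, ?_, fun k hk => ?_, hbound⟩
  · rcases le_or_gt i n with hi | hi
    · have := (hρ i hi).2
      have : ν (i + 1) ≤ ν i := h.antitone i.le_succ
      omega
    · simp [hzero (i + 1) (by omega)]
  · have hlast : ν l - ρ l = 0 := by
      have := hbound l
      rw [Ico_self, sum_empty] at this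
      omega
    rw [← htotal', ← eventually_constant_sum hzero (h.lt_of_pos hn.1), sum_range_succ, hlast,
      add_zero]
  · rcases le_or_gt k n with hkn | hkn
    · have := hsub k (by omega)
      have := hpre k hkn
      have := h.dominates k (by omega)
      omega
    · rw [eventually_constant_sum hzero hkn, htotal']
      exact sum_le_sum_of_subset (range_mono hk)

/-- The removed row has content `ν - κ`. The two inequalities at `n` give it a letter `n + 1` if it
overlaps the row above, and in that case give slack to the shorter ribbon; the last clause gives it
a letter smaller than `n + 1` when `ν` has slack. -/
theorem IsAdmissible.exists_pred (h : IsAdmissible α ov (l + 1) ν)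
    (hα : ∀ i < l, α l ≤ α i) (h2 : 2 ≤ α l) (hn : IsLastPart ν n) :
    ∃ κ, IsAdmissible α ov l κ ∧ (∀ i, ν (i + 1) ≤ κ i ∧ κ i ≤ ν i) ∧
      κ n + overlaps ov (l - 1) l ≤ ν n ∧ κ n + overlaps ov n l ≤ ∑ k ∈ Ico n l, α k ∧
      (HasSlack α ov (l + 1) ν n → ∃ j < n, κ j < ν j) := by
  have h2' : ∀ i < l, 2 ≤ α i := fun i hi => h2.trans (hα i hi)
  obtain ⟨ρ, hρ, hsum, hpre⟩ := exists_mem_Icc_sum_eq_prefix_le (N := n + 1)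
    (fun i hi => h.minDrop_le_maxDrop hα h2 hn.1 (Nat.le_of_lt_succ hi))
    (h.sum_minDrop_le hα h2 hn.1)
    (by simpa using h.le_add_sum_maxDrop hα hn n.zero_le)
    (fun k hk => h.prefix_minDrop_le hα h2 hn.1 (Nat.le_of_lt_succ hk))
    (fun k hk => h.le_add_sum_maxDrop hα hn (Nat.le_of_lt_succ hk))
  have hρ' : ∀ i ≤ n, forcedDrop α ov l ν i ≤ ρ i ∧ ρ i ≤ ν i - ν (i + 1) := fun i hi =>
    have hρi := hρ i (Nat.lt_succ_of_le hi)
    ⟨(forcedDrop_le_minDrop hi).trans hρi.1, hρi.2.trans (maxDrop_le hi hn.2)⟩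
  have hstrip : ∀ i, ν (i + 1) ≤ ν i - ρ i := fun i => by
    rcases le_or_gt i n with hi | hi
    · have := (hρ' i hi).2
      have : ν (i + 1) ≤ ν i := h.antitone i.le_succ
      omega
    · simp [hn.eq_zero h.antitone (Nat.succ_le_succ hi.le)]
  obtain ⟨hρmin, hρmax⟩ := hρ n n.lt_succ_self
  rw [minDrop_last, max_le_iff] at hρmin
  have hρn : ρ n ≤ ν n := (hρ' n le_rfl).2.trans (Nat.sub_le _ _)
  have hcap := overlaps_le_sum (ov := ov) (n := n) h2' le_rfl
  have hother : HasSlack α ov (l + 1) ν n → ∃ j < n, ν j - ρ j < ν j := fun hslack => by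
    rw [maxDrop_last, if_pos hslack] at hρmax
    rw [sum_range_succ] at hsum
    obtain ⟨j, hj, hpos⟩ := (sum_pos_iff (s := range n) (f := ρ)).1 (by omega)
    rw [mem_range] at hj
    have := (hρ' j hj.le).2
    exact ⟨j, hj, by omega⟩
  exact ⟨fun i => ν i - ρ i, h.tsub h2' hn hρ' hsum fun k hk => hpre k (Nat.lt_succ_of_le hk),
    fun i => ⟨hstrip i, Nat.sub_le _ _⟩, (by omega : ν n - ρ n + _ ≤ _),
    (by omega : ν n - ρ n + _ ≤ _), hother⟩

theorem IsAdmissible.exists_isLastPart (h : IsAdmissible α ov l ν) (hl : 0 < l) (hα : 0 < α 0) :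
    ∃ n, IsLastPart ν n := by
  by_contra! hnone
  have hpos : ∀ i, 0 < ν i := fun i => by
    induction i with
    | zero => simpa using hα.trans_le (by simpa using h.dominates 1 hl)
    | succ i ih => exact Nat.pos_of_ne_zero fun hi => hnone i ⟨ih, hi⟩
  exact (hpos l).ne' (h.eq_zero le_rfl)

theorem IsAdmissible.hasSlack (h : IsAdmissible α ov l ν) (hn : IsLastPart ν n)
    (hlt : 0 < n → ν n < ν (n - 1)) (hov : 0 < overlaps ov (l - 1) l)
    (hbound : ν n + overlaps ov n l ≤ ∑ k ∈ Ico n l, α k) : HasSlack α ov l ν n := by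
  have hnl := h.lt_of_pos hn.1
  have := overlaps_add (ov := ov) (Nat.le_sub_one_of_lt hnl) l.pred_le
  refine ⟨hlt (Nat.pos_of_ne_zero ?_), by omega⟩
  rintro rfl
  have htotal := h.sum_range_last hn
  rw [sum_range_zero, zero_add, range_eq_Ico] at htotal
  omega

end

/-! ### LR words of ribbons -/

section

/-- `w` is a reading word of an LR filling of content `ν`: a Yamanouchi word with `ν j` letters
`j + 1`. -/
structure IsLRWord (ν : ℕ → ℕ) (w : List ℕ) : Prop where
  yam : IsYam w
  count_succ : ∀ j, w.count (j + 1) = ν j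
  count_zero : w.count 0 = 0

/-- `IsRibbonWord` built row by row: `w` is the reading word of a filling of a ribbon with `l` rows
of lengths `α 0, …, α (l - 1)` that increases along rows and down the columns of length two. -/
inductive RibbonRows (α : ℕ → ℕ) (ov : ℕ → Bool) : ℕ → List ℕ → Prop
  | nil : RibbonRows α ov 0 []
  | snoc {l : ℕ} {u v : List ℕ} : RibbonRows α ov l u → v.length = α l → v.Pairwise (· ≥ ·) →
      (ov (l - 1) = true → ∀ x ∈ u.getLast?, ∀ y ∈ v.head?, x < y) →
      RibbonRows α ov (l + 1) (u ++ v)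

variable {α ν κ : ℕ → ℕ} {ov : ℕ → Bool} {l n : ℕ} {u v w : List ℕ}

theorem IsYam.of_append (h : IsYam (u ++ v)) : IsYam u := fun k j => by
  rw [← List.take_left' (l₂ := v) (rfl : u.length = _), List.take_take]
  exact h _ j

theorem IsYam.append (hu : IsYam u) (h : ∀ j, (u ++ v).count (j + 2) ≤ u.count (j + 1)) :
    IsYam (u ++ v) := fun k j => by
  rcases le_total k u.length with hk | hk
  · rw [List.take_append_of_le_length hk]
    exact hu k j
  · calc ((u ++ v).take k).count (j + 2) ≤ (u ++ v).count (j + 2) :=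
          (List.take_sublist _ _).count_le _
      _ ≤ u.count (j + 1) := h j
      _ ≤ ((u ++ v).take k).count (j + 1) := by
          rw [List.take_append, List.take_of_length_le hk]
          exact (List.sublist_append_left _ _).count_le _

theorem IsYam.antitone (h : IsYam w) : Antitone fun j => w.count (j + 1) :=
  antitone_nat_of_succ_le fun j => by simpa using h w.length j

theorem le_of_mem_head? (hv : v.Pairwise (· ≥ ·)) {x y : ℕ} (hx : x ∈ v) (hy : y ∈ v.head?) :
    x ≤ y := by
  cases v with
  | nil => simp at hy
  | cons z t =>
    obtain rfl : z = y := by simpa using hy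
    rcases List.mem_cons.1 hx with rfl | hx
    exacts [le_rfl, List.rel_of_pairwise_cons hv hx]

theorem le_of_mem_getLast? (hv : v.Pairwise (· ≥ ·)) {x y : ℕ} (hx : x ∈ v)
    (hy : y ∈ v.getLast?) : y ≤ x := by
  rcases v.eq_nil_or_concat' with rfl | ⟨t, z, rfl⟩
  · simp at hy
  · obtain rfl : z = y := by simpa using hy
    rcases List.mem_append.1 hx with hx | hx
    · exact (List.pairwise_append.1 hv).2.2 x hx z (by simp)
    · exact (List.mem_singleton.1 hx).ge

theorem length_eq_sum_count (h0 : w.count 0 = 0) (hw : ∀ x ∈ w, x ≤ l) :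
    w.length = ∑ i ∈ Finset.range l, w.count (i + 1) := by
  have := Finset.sum_range_succ' (fun i => w.count i) l
  rw [h0, add_zero] at this
  rw [← this]
  simpa using (Multiset.sum_count_eq_card (s := Finset.range (l + 1)) (m := (w : Multiset ℕ))
    fun x hx => Finset.mem_range_succ_iff.2 (hw x hx)).symm

theorem exists_pairwise_ge_count_eq {N : ℕ} {δ : ℕ → ℕ} (hδ : ∀ i, N ≤ i → δ i = 0) :
    ∃ v : List ℕ, v.Pairwise (· ≥ ·) ∧ (∀ i, v.count (i + 1) = δ i) ∧ v.count 0 = 0 := by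
  set s : Multiset ℕ := ∑ i ∈ Finset.range N, Multiset.replicate (δ i) (i + 1)
  have hcount : ∀ c, (s.sort (· ≥ ·)).count c = s.count c := fun c => by
    rw [← Multiset.coe_count, Multiset.sort_eq]
  refine ⟨s.sort (· ≥ ·), s.pairwise_sort _, fun i => ?_, ?_⟩
  · rw [hcount]
    simpa [s, Multiset.count_sum', Multiset.count_replicate] using fun hi => (hδ i hi).symm
  · rw [hcount]
    simp [s, Multiset.count_sum', Multiset.count_replicate]

theorem IsLRWord.le_of_eq_zero (h : IsLRWord ν w) (hν : Antitone ν) (hn : ν n = 0) :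
    ∀ x ∈ w, x ≤ n := fun x hx => by
  by_contra! hlt
  obtain ⟨j, rfl⟩ := Nat.exists_eq_add_of_lt hlt
  have := List.count_pos_iff.2 hx
  rw [h.count_succ, Nat.le_zero.1 ((hν (Nat.le_add_right n j)).trans_eq hn)] at this
  exact this.false

theorem RibbonRows.length_eq (h : RibbonRows α ov l w) :
    w.length = ∑ i ∈ Finset.range l, α i := by
  induction h with
  | nil => rfl
  | snoc _ hv _ _ ih => rw [List.length_append, Finset.sum_range_succ, ih, hv]

/-- The first letter of a row is its largest, and the lattice condition bounds it. -/
theorem RibbonRows.le_of_mem (h : RibbonRows α ov l w) (hw : IsYam w) : ∀ x ∈ w, x ≤ l := by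
  induction h with
  | nil => simp
  | @snoc l u v _ _ hsorted _ ih =>
    have hu := ih hw.of_append
    have hhead : ∀ y ∈ v.head?, y ≤ l + 1 := fun y hy => by
      obtain ⟨t, rfl⟩ : ∃ t, v = y :: t := List.head?_eq_some_iff.1 hy
      by_contra! hlt
      obtain ⟨j, rfl⟩ : ∃ j, y = j + 2 := ⟨y - 2, by omega⟩
      have hprefix : IsYam (u ++ [j + 2]) := IsYam.of_append (v := t) (by simpa using hw)
      have : u.count (j + 1) = 0 := List.count_eq_zero.2 fun hmem => by
        have := hu _ hmem
        omega
      simpa [this] using hprefix.antitone j.le_succ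
    intro x hx
    rcases List.mem_append.1 hx with hx | hx
    · exact (hu x hx).trans l.le_succ
    · cases v with
      | nil => simp at hx
      | cons y t => exact (le_of_mem_head? hsorted hx rfl).trans (hhead y rfl)

theorem RibbonRows.sum_le_sum_count (h : RibbonRows α ov l w) (hw : IsYam w)
    (h0 : w.count 0 = 0) {k : ℕ} (hk : k ≤ l) :
    ∑ i ∈ Finset.range k, α i ≤ ∑ i ∈ Finset.range k, w.count (i + 1) := by
  induction h with
  | nil => simp_all
  | @snoc l u v hu hlen hsorted hgap ih =>
    rcases hk.eq_or_lt with rfl | hk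
    · have hrows := hu.snoc hlen hsorted hgap
      rw [← hrows.length_eq, ← length_eq_sum_count h0 (hrows.le_of_mem hw)]
    · rw [List.count_append] at h0
      refine (ih hw.of_append (by omega) (Nat.le_of_lt_succ hk)).trans ?_
      exact Finset.sum_le_sum fun i _ => (List.sublist_append_left u v).count_le _

theorem count_add_ite_le_length (hv : 2 ≤ v.length) (c : ℕ) :
    v.count c + (if v.head? = some c then 0 else 1) + (if v.getLast? = some c then 0 else 1) ≤
      v.length := by
  obtain ⟨x, t, rfl⟩ := List.exists_cons_of_length_pos (show 0 < v.length by omega)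
  rcases t.eq_nil_or_concat' with rfl | ⟨t, y, rfl⟩
  · simp at hv
  · have := t.count_le_length (a := c)
    have hlast : (x :: (t ++ [y])).getLast? = some y := by
      rw [← List.cons_append, List.getLast?_concat]
    simp only [hlast, List.head?_cons, Option.some_inj, List.count_cons, List.count_append,
      List.count_nil, List.length_cons, List.length_append, List.length_nil, beq_iff_eq]
    split_ifs <;> omega

/-- The correction for the last letter makes the induction on rows work: at an overlap the adjacent
letters of the two rows differ, so one of them is not `i + 1`. -/
theorem RibbonRows.count_add_overlaps_le (h : RibbonRows α ov l w) (hw : IsYam w)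
    (h2 : ∀ i < l, 2 ≤ α i) {i : ℕ} (hi : i < l) :
    w.count (i + 1) + overlaps ov i (l - 1) + (if w.getLast? = some (i + 1) then 0 else 1) ≤
      ∑ j ∈ Finset.Ico i l, α j := by
  induction h with
  | nil => simp at hi
  | @snoc l u v hu hlen _ hgap ih =>
    have hα := h2 l l.lt_succ_self
    have hv := count_add_ite_le_length (hα.trans_eq hlen.symm) (i + 1)
    have hlast : (u ++ v).getLast? = v.getLast? :=
      List.getLast?_append_of_ne_nil _ (List.ne_nil_of_length_pos (by omega))
    rw [List.count_append, hlast, Finset.sum_Ico_succ_top (Nat.le_of_lt_succ hi),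
      Nat.add_sub_cancel]
    rcases (Nat.le_of_lt_succ hi).eq_or_lt with rfl | hil
    · have : u.count (i + 1) = 0 :=
        List.count_eq_zero.2 fun hmem => absurd (hu.le_of_mem hw.of_append _ hmem) (by omega)
      rw [overlaps_of_le le_rfl]
      omega
    · have hprev := ih hw.of_append (fun j hj => h2 j (hj.trans l.lt_succ_self)) hil
      have hsplit := overlaps_add (ov := ov) (Nat.le_sub_one_of_lt hil) l.pred_le
      have hletters : overlaps ov (l - 1) l ≤ (if u.getLast? = some (i + 1) then 0 else 1) +
          (if v.head? = some (i + 1) then 0 else 1) := by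
        rw [overlaps_pred]
        split_ifs with hov hx hy <;> try omega
        exact ((hgap hov.2 _ hx _ hy).false).elim
      omega

theorem RibbonRows.isAdmissible (h : RibbonRows α ov l w) (h2 : ∀ i < l, 2 ≤ α i)
    (hw : IsLRWord ν w) : IsAdmissible α ov l ν := by
  have hcount : (fun i => w.count (i + 1)) = ν := funext hw.count_succ
  have hle := h.le_of_mem hw.yam
  subst hcount
  refine ⟨hw.yam.antitone, ?_, fun k hk => h.sum_le_sum_count hw.yam hw.count_zero hk, fun i => ?_⟩
  · rw [← h.length_eq, length_eq_sum_count hw.count_zero hle]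
  · rcases lt_or_ge i l with hi | hi
    · have := h.count_add_overlaps_le hw.yam h2 hi
      omega
    · have : w.count (i + 1) = 0 :=
        List.count_eq_zero.2 fun hmem => absurd (hle _ hmem) (by omega)
      simp [this, overlaps_of_le (show l - 1 ≤ i by omega)]

theorem IsLRWord.append (hu : IsLRWord κ u) (hstrip : ∀ i, ν (i + 1) ≤ κ i ∧ κ i ≤ ν i)
    (hv : ∀ i, v.count (i + 1) = ν i - κ i) (hv0 : v.count 0 = 0) : IsLRWord ν (u ++ v) := by
  have hcount : ∀ j, (u ++ v).count (j + 1) = ν j := fun j => by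
    rw [List.count_append, hu.count_succ, hv, Nat.add_sub_cancel' (hstrip j).2]
  refine ⟨hu.yam.append fun j => ?_, hcount, by rw [List.count_append, hu.count_zero, hv0]⟩
  rw [hcount (j + 1), hu.count_succ]
  exact (hstrip j).1

theorem IsLRWord.length_eq (hw : IsLRWord ν w) (h : IsAdmissible α ov l ν) :
    w.length = ∑ i ∈ Finset.range l, α i := by
  rw [← h.sum_eq, length_eq_sum_count hw.count_zero
    (hw.le_of_eq_zero h.antitone (h.eq_zero le_rfl))]
  exact Finset.sum_congr rfl fun i _ => hw.count_succ i

theorem succ_mem_of_lt (hv : ∀ i, v.count (i + 1) = ν i - κ i) (hn : κ n < ν n) : n + 1 ∈ v :=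
  List.count_pos_iff.1 (by rw [hv]; omega)

/-- The clause about the last letter carries the induction: whenever the next row overlaps this one
there is slack, so that the largest letter of the next row exceeds the last letter of this one. -/
theorem IsAdmissible.exists_ribbonRows (hα : Antitone α) (h2 : ∀ i < l, 2 ≤ α i)
    (h : IsAdmissible α ov l ν) :
    ∃ w, RibbonRows α ov l w ∧ IsLRWord ν w ∧
      ∀ n, IsLastPart ν n → HasSlack α ov l ν n → ∀ x ∈ w.getLast?, x ≤ n := by
  induction l generalizing ν with
  | zero =>
    exact ⟨[], .nil, ⟨fun k j => by simp, fun j => by simp [h.eq_zero j.zero_le], rfl⟩, by simp⟩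
  | succ l ih =>
    have hl : 2 ≤ α l := h2 l l.lt_succ_self
    obtain ⟨n, hn⟩ := h.exists_isLastPart l.succ_pos (two_pos.trans_le (h2 0 l.succ_pos))
    obtain ⟨κ, hκ, hstrip, hgap, hbound, hslack⟩ := h.exists_pred (fun i hi => hα hi.le) hl hn
    obtain ⟨u, hu, huκ, hulast⟩ := ih (fun i hi => h2 i (hi.trans l.lt_succ_self)) hκ
    obtain ⟨v, hsorted, hv, hv0⟩ := exists_pairwise_ge_count_eq (N := l + 1)
      (δ := fun i => ν i - κ i) fun i hi => by simp [h.eq_zero hi]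
    have hw := huκ.append hstrip hv hv0
    have hlen : v.length = α l := by
      have := hw.length_eq h
      rw [List.length_append, hu.length_eq, Finset.sum_range_succ] at this
      omega
    refine ⟨u ++ v, hu.snoc hlen hsorted fun hov x hx y hy => ?_, hw, fun m hm hs x hx => ?_⟩
    · have hlpos : 0 < l := Nat.pos_of_ne_zero fun h0 => by subst h0; cases hu; simp at hx
      have hov' : overlaps ov (l - 1) l = 1 := by rw [overlaps_pred, if_pos ⟨hlpos, hov⟩]
      have hxn : x ≤ n := by
        rcases (κ n).eq_zero_or_pos with hκn | hκn
        · exact huκ.le_of_eq_zero hκ.antitone hκn x (List.mem_of_getLast? hx)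
        · have hlast : IsLastPart κ n := ⟨hκn, Nat.le_zero.1 ((hstrip _).2.trans_eq hn.2)⟩
          refine hulast n hlast (hκ.hasSlack hlast (fun hpos => ?_) (by omega) hbound) x hx
          have := (hstrip (n - 1)).1
          rw [Nat.sub_add_cancel hpos] at this
          omega
      exact (Nat.lt_succ_of_le hxn).trans_le
        (le_of_mem_head? hsorted (succ_mem_of_lt hv (by omega)) hy)
    · obtain rfl := hm.eq hn h.antitone
      obtain ⟨j, hj, hlt⟩ := hslack hs
      rw [List.getLast?_append_of_ne_nil _ (List.ne_nil_of_length_pos (by omega))] at hx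
      exact (le_of_mem_getLast? hsorted (succ_mem_of_lt hv hlt) hx).trans hj

theorem exists_ribbonRows_iff_isAdmissible (hα : Antitone α) (h2 : ∀ i < l, 2 ≤ α i) :
    (∃ w, RibbonRows α ov l w ∧ IsLRWord ν w) ↔ IsAdmissible α ov l ν :=
  ⟨fun ⟨_, hw, hν⟩ => hw.isAdmissible h2 hν, fun h =>
    (h.exists_ribbonRows hα h2).imp fun _ hw => ⟨hw.1, hw.2.1⟩⟩

end

/-! ### Ribbon words row by row -/

section

variable {a p ν w u v : List ℕ} {ov : ℕ → Bool} {l m i j : ℕ}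

theorem rowOffset_append (b : List ℕ) (hi : i ≤ a.length) :
    rowOffset (a ++ b) i = rowOffset a i := by
  rw [rowOffset, List.take_append_of_le_length hi, rowOffset]

theorem rowOffset_length (a : List ℕ) : rowOffset a a.length = a.sum := by
  rw [rowOffset, List.take_length]

theorem rowOffset_add_lt (hj : j < a.getD i 0) : rowOffset a i + j < a.sum := by
  have hi : i < a.length := by
    by_contra! hi
    rw [List.getD_eq_default _ _ hi] at hj
    exact Nat.not_lt_zero j hj
  have := List.sum_take_add_sum_drop a i
  rw [List.drop_eq_getElem_cons hi, List.sum_cons] at this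
  rw [List.getD_eq_getElem _ _ hi] at hj
  rw [rowOffset]
  omega

theorem pairwise_ge_iff_getD :
    v.Pairwise (· ≥ ·) ↔ ∀ j, j + 1 < v.length → v.getD (j + 1) 0 ≤ v.getD j 0 := by
  rw [← List.isChain_iff_pairwise, List.isChain_iff_getElem]
  refine forall₂_congr fun j hj => ?_
  rw [List.getD_eq_getElem _ _ hj, List.getD_eq_getElem _ _ (Nat.lt_of_succ_lt hj)]

theorem lt_of_mem_getLast?_head?_iff (hu : 0 < u.length) (hv : 0 < v.length) :
    (∀ x ∈ u.getLast?, ∀ y ∈ v.head?, x < y) ↔ u.getD (u.length - 1) 0 < v.getD 0 0 := by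
  have hu' : u.length - 1 < u.length := by omega
  simp [List.getLast?_eq_getElem?, List.head?_eq_getElem?, hu', hv]

theorem rows_concat_iff (hu : u.length = a.sum) (hv : v.length = m) :
    (∀ i j, i < (a ++ [m]).length → j + 1 < (a ++ [m]).getD i 0 →
      (u ++ v).getD (rowOffset (a ++ [m]) i + j + 1) 0 ≤
        (u ++ v).getD (rowOffset (a ++ [m]) i + j) 0) ↔
    (∀ i j, i < a.length → j + 1 < a.getD i 0 →
      u.getD (rowOffset a i + j + 1) 0 ≤ u.getD (rowOffset a i + j) 0) ∧ v.Pairwise (· ≥ ·) := by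
  have hold : ∀ i j, i < a.length → j + 1 < a.getD i 0 →
      ((u ++ v).getD (rowOffset (a ++ [m]) i + j + 1) 0 ≤
        (u ++ v).getD (rowOffset (a ++ [m]) i + j) 0 ↔
      u.getD (rowOffset a i + j + 1) 0 ≤ u.getD (rowOffset a i + j) 0) := fun i j hi hj => by
    have hlt : rowOffset a i + j + 1 < u.length := hu ▸ rowOffset_add_lt (j := j + 1) hj
    rw [rowOffset_append _ hi.le, List.getD_append _ _ _ _ hlt,
      List.getD_append _ _ _ _ (Nat.lt_of_succ_lt hlt)]
  have hnew : ∀ j, (u ++ v).getD (rowOffset (a ++ [m]) a.length + j) 0 = v.getD j 0 := fun j => by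
    rw [rowOffset_append _ le_rfl, rowOffset_length, ← hu,
      List.getD_append_right _ _ _ _ (Nat.le_add_right _ _), Nat.add_sub_cancel_left]
  have hlast : (a ++ [m]).getD a.length 0 = v.length := by simp [hv]
  have hlen : ∀ i, i < (a ++ [m]).length ↔ i ≤ a.length := fun i => by
    rw [List.length_append, List.length_singleton, Nat.lt_succ_iff]
  rw [pairwise_ge_iff_getD]
  refine ⟨fun h => ⟨fun i j hi hj => ?_, fun j hj => ?_⟩, fun ⟨h, hsorted⟩ i j hi hj => ?_⟩
  · exact (hold i j hi hj).1 (h i j ((hlen i).2 hi.le) (by rwa [List.getD_append _ _ _ _ hi]))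
  · rw [← hnew, ← hnew]
    exact h a.length j ((hlen _).2 le_rfl) (hlast ▸ hj)
  · rcases lt_or_ge i a.length with hi' | hi'
    · rw [List.getD_append _ _ _ _ hi'] at hj
      exact (hold i j hi' hj).2 (h i j hi' hj)
    · obtain rfl : i = a.length := ((hlen i).1 hi).antisymm hi'
      rw [Nat.add_assoc, hnew, hnew]
      exact hsorted j (hlast ▸ hj)

theorem gaps_concat_iff (ha : ∀ x ∈ a, 0 < x) (hu : u.length = a.sum) (hv : 0 < v.length) :
    (∀ i, i + 1 < (a ++ [m]).length → ov i = true →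
      (u ++ v).getD (rowOffset (a ++ [m]) (i + 1) - 1) 0 <
        (u ++ v).getD (rowOffset (a ++ [m]) (i + 1)) 0) ↔
    (∀ i, i + 1 < a.length → ov i = true →
      u.getD (rowOffset a (i + 1) - 1) 0 < u.getD (rowOffset a (i + 1)) 0) ∧
      (ov (a.length - 1) = true → ∀ x ∈ u.getLast?, ∀ y ∈ v.head?, x < y) := by
  have hold : ∀ i, i + 1 < a.length →
      ((u ++ v).getD (rowOffset (a ++ [m]) (i + 1) - 1) 0 <
        (u ++ v).getD (rowOffset (a ++ [m]) (i + 1)) 0 ↔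
      u.getD (rowOffset a (i + 1) - 1) 0 < u.getD (rowOffset a (i + 1)) 0) := fun i hi => by
    have hpos : 0 < a.getD (i + 1) 0 := by
      rw [List.getD_eq_getElem _ _ hi]
      exact ha _ (List.getElem_mem hi)
    have hlt : rowOffset a (i + 1) < u.length := hu ▸ rowOffset_add_lt hpos
    rw [rowOffset_append _ hi.le, List.getD_append _ _ _ _ hlt,
      List.getD_append _ _ _ _ ((Nat.sub_le _ _).trans_lt hlt)]
  rcases a.eq_nil_or_concat' with rfl | ⟨b, x, hab⟩
  · obtain rfl : u = [] := List.length_eq_zero_iff.1 hu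
    simp
  have hlen : a.length = b.length + 1 := by simp [hab]
  have hu0 : 0 < u.length := by
    rw [hu, hab, List.sum_append, List.sum_singleton]
    exact Nat.add_pos_right _ (ha x (by simp [hab]))
  have hnew : (u ++ v).getD (rowOffset (a ++ [m]) (b.length + 1) - 1) 0 <
      (u ++ v).getD (rowOffset (a ++ [m]) (b.length + 1)) 0 ↔
      ∀ x ∈ u.getLast?, ∀ y ∈ v.head?, x < y := by
    rw [← hlen, rowOffset_append _ le_rfl, rowOffset_length, ← hu,
      lt_of_mem_getLast?_head?_iff hu0 hv, List.getD_append _ _ _ _ (by omega),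
      List.getD_append_right _ _ _ _ le_rfl, Nat.sub_self]
  have hbound : ∀ i, i + 1 < (a ++ [m]).length ↔ i < b.length + 1 := fun i => by simp [hlen]
  simp only [hbound, Nat.forall_lt_succ_right, hnew]
  rw [hlen]
  simp only [Nat.add_lt_add_iff_right, Nat.add_sub_cancel]
  exact and_congr_left' (forall₂_congr fun i hi => by rw [hold i (by omega)])

theorem isRibbonWord_concat (ha : ∀ x ∈ a, 0 < x) (hm : 0 < m) (hu : u.length = a.sum)
    (hv : v.length = m) : IsRibbonWord (a ++ [m]) ov (u ++ v) ↔ IsRibbonWord a ov u ∧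
      v.Pairwise (· ≥ ·) ∧
        (ov (a.length - 1) = true → ∀ x ∈ u.getLast?, ∀ y ∈ v.head?, x < y) := by
  rw [IsRibbonWord, rows_concat_iff hu hv, gaps_concat_iff ha hu (hv.symm ▸ hm), IsRibbonWord]
  simp only [List.length_append, List.sum_append, List.sum_singleton, hu, hv, true_and]
  tauto

theorem isRibbonWord_take_iff (ha : ∀ x ∈ a, 0 < x) (hl : l ≤ a.length) :
    IsRibbonWord (a.take l) ov w ↔ RibbonRows (fun i => a.getD i 0) ov l w := by
  induction l generalizing w with
  | zero =>
    rw [List.take_zero]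
    constructor
    · intro h
      obtain rfl : w = [] := List.length_eq_zero_iff.1 h.1
      exact .nil
    · rintro ⟨⟩
      simp [IsRibbonWord]
  | succ l ih =>
    have hl' : l < a.length := hl
    have hα : a.getD l 0 = a[l] := List.getD_eq_getElem _ _ hl'
    have hpos := fun x hx => ha x (List.mem_of_mem_take (i := l) hx)
    have hm : 0 < a[l] := ha _ (List.getElem_mem hl')
    have hlen : (a.take l).length = l := List.length_take_of_le hl'.le
    rw [List.take_succ_eq_append_getElem hl']
    constructor
    · intro h
      have hw := h.1
      rw [List.sum_append, List.sum_singleton] at hw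
      have htake : (w.take (a.take l).sum).length = (a.take l).sum :=
        List.length_take_of_le (hw ▸ Nat.le_add_right _ _)
      have hdrop : (w.drop (a.take l).sum).length = a[l] := by
        rw [List.length_drop, hw, Nat.add_sub_cancel_left]
      rw [← List.take_append_drop (a.take l).sum w,
        isRibbonWord_concat hpos hm htake hdrop, hlen, ih hl'.le] at h
      rw [← List.take_append_drop (a.take l).sum w]
      exact .snoc h.1 (hdrop.trans hα.symm) h.2.1 h.2.2
    · rintro (_ | ⟨hu, hv, hsorted, hgap⟩)
      rw [← ih hl'.le] at hu
      rw [isRibbonWord_concat hpos hm hu.1 (hv.trans hα), hlen]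
      exact ⟨hu, hsorted, hgap⟩

theorem isRibbonWord_iff (ha : ∀ x ∈ a, 0 < x) :
    IsRibbonWord a ov w ↔ RibbonRows (fun i => a.getD i 0) ov a.length w := by
  rw [← isRibbonWord_take_iff ha le_rfl, List.take_length]

theorem antitone_getD (hv : v.Pairwise (· ≥ ·)) : Antitone fun i => v.getD i 0 :=
  antitone_nat_of_succ_le fun i => by
    rcases lt_or_ge (i + 1) v.length with hi | hi
    · exact pairwise_ge_iff_getD.1 hv i hi
    · exact (List.getD_eq_default _ _ hi).trans_le (Nat.zero_le _)

theorem sum_take_eq (k : ℕ) (v : List ℕ) :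
    (v.take k).sum = ∑ i ∈ Finset.range k, v.getD i 0 := by
  induction k generalizing v with
  | zero => simp
  | succ k ih => cases v <;> simp [Finset.sum_range_succ', ih, add_comm]

theorem sum_drop_eq (i : ℕ) (v : List ℕ) :
    (v.drop i).sum = ∑ j ∈ Finset.Ico i v.length, v.getD j 0 := by
  rcases le_total i v.length with hi | hi
  · have := v.sum_take_add_sum_drop i
    have := Finset.sum_range_add_sum_Ico (fun i => v.getD i 0) hi
    rw [← sum_take_eq, ← sum_take_eq, List.take_length] at this
    omega
  · simp [List.drop_eq_nil_of_le hi, hi]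

theorem IsOverlapSeq.antitone (hp : IsOverlapSeq a p) : Antitone fun i => p.getD i 0 :=
  antitone_nat_of_succ_le fun i => by
    rcases lt_or_ge (i + 1) a.length with hi | hi
    · rcases hp.2.2 i hi with h | h <;> omega
    · exact (List.getD_eq_default _ _ (hp.1.trans_le hi)).trans_le (Nat.zero_le _)

theorem IsOverlapSeq.getD_eq_overlaps_add (hp : IsOverlapSeq a p) (hij : i ≤ j)
    (hj : j < a.length) : p.getD i 0 = overlaps (ovOf p) i j + p.getD j 0 := by
  induction j, hij using Nat.le_induction with
  | base => rw [overlaps_of_le le_rfl, Nat.zero_add]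
  | succ j hij ih =>
    have hstep := hp.2.2 j hj
    have hlast := overlaps_pred (ov := ovOf p) (j + 1)
    simp only [Nat.add_sub_cancel, Nat.succ_pos, true_and, ovOf, decide_eq_true_eq] at hlast
    rw [ih (Nat.lt_of_succ_lt hj), ← overlaps_add hij j.le_succ]
    simp only [Nat.succ_eq_add_one] at hlast ⊢
    split_ifs at hlast <;> omega

theorem IsOverlapSeq.getD_eq_overlaps (hp : IsOverlapSeq a p) (i : ℕ) :
    p.getD i 0 = overlaps (ovOf p) i (a.length - 1) := by
  rcases lt_or_ge i a.length with hi | hi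
  · rw [hp.getD_eq_overlaps_add (Nat.le_sub_one_of_lt hi) (by omega), hp.2.1, add_zero]
  · rw [List.getD_eq_default _ _ (hp.1.trans_le hi), overlaps_of_le (by omega)]

theorem lt_lenp (hp : Antitone fun i => p.getD i 0) (hi : p.getD i 0 ≠ 0) : i < lenp p := by
  have hlen : i < p.length := by
    by_contra! h
    exact hi (List.getD_eq_default _ _ h)
  have hall : (p.take (i + 1)).countP (fun x => decide (x ≠ 0)) = (p.take (i + 1)).length := by
    refine List.countP_eq_length.2 fun x hx => decide_eq_true ?_
    obtain ⟨j, hj, rfl⟩ := List.mem_take_iff_getElem.1 hx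
    have hle : p.getD i 0 ≤ p.getD j 0 := hp (by omega)
    rw [List.getD_eq_getElem p 0 (hj.trans_le (min_le_right _ _))] at hle
    omega
  rw [List.length_take_of_le hlen] at hall
  exact hall.symm.trans_le (List.take_sublist _ _).countP_le

theorem domLE_pair_iff : DomLE v [v.sum - m, m] ↔ v.getD 0 0 + m ≤ v.sum := by
  have hone : (v.take 1).sum = v.getD 0 0 := by simp [sum_take_eq]
  constructor
  · rintro ⟨hsum, hle⟩
    have := hle 1
    simp only [List.sum_cons, List.sum_nil, List.take_succ_cons, List.take_zero] at hsum this
    omega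
  · refine fun h => ⟨by simp only [List.sum_cons, List.sum_nil]; omega, fun i => ?_⟩
    match i with
    | 0 => simp
    | 1 =>
      simp only [List.take_succ_cons, List.take_zero, List.sum_cons, List.sum_nil]
      omega
    | i + 2 =>
      have := v.sum_take_add_sum_drop (i + 2)
      simp only [List.take_succ_cons, List.take_nil, List.sum_cons, List.sum_nil]
      omega

theorem IsAdmissible.domLE (h : IsAdmissible (fun i => a.getD i 0) ov a.length fun i => ν.getD i 0)
    (hsum : ν.sum = a.sum) : DomLE a ν := by
  refine ⟨hsum.symm, fun k => ?_⟩
  rcases le_total k a.length with hk | hk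
  · simpa only [sum_take_eq] using h.dominates k hk
  · calc (a.take k).sum = (a.take a.length).sum := by
          rw [List.take_of_length_le hk, List.take_length]
      _ = (ν.take a.length).sum := by simpa only [sum_take_eq] using h.sum_eq.symm
      _ ≤ (ν.take k).sum := by
          simpa only [sum_take_eq] using Finset.sum_le_sum_of_subset (Finset.range_mono hk)

theorem DomLE.getD_le_sum_drop (h : DomLE a ν) (i : ℕ) : ν.getD i 0 ≤ (a.drop i).sum := by
  have hprefix : (ν.take i).sum + ν.getD i 0 ≤ ν.sum := by
    rw [← ν.sum_take_add_sum_drop (i + 1), sum_take_eq, sum_take_eq, Finset.sum_range_succ]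
    exact Nat.le_add_right _ _
  have := a.sum_take_add_sum_drop i
  have := h.2 i
  have := h.1
  omega

theorem isAdmissible_iff (hp : IsOverlapSeq a p) (hν : ν.Pairwise (· ≥ ·))
    (hsum : ν.sum = a.sum) :
    IsAdmissible (fun i => a.getD i 0) (ovOf p) a.length (fun i => ν.getD i 0) ↔
      InInterval a p ν ∧ ∀ i, i < lenp p → ν.getD i 0 + p.getD i 0 ≤ (a.drop i).sum := by
  simp only [InInterval, ← hsum, domLE_pair_iff]
  constructor
  · refine fun h => ⟨⟨h.domLE hsum, ?_⟩, fun i _ => ?_⟩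
    · rw [hsum, hp.getD_eq_overlaps, ← a.drop_zero, sum_drop_eq]
      exact h.bound 0
    · rw [hp.getD_eq_overlaps, sum_drop_eq]
      exact h.bound i
  · rintro ⟨⟨hdom, -⟩, hbound⟩
    refine ⟨antitone_getD hν, ?_, fun k _ => ?_, fun i => ?_⟩
    · have hall := hdom.2 a.length
      have := ν.sum_take_add_sum_drop a.length
      simp only [← sum_take_eq, List.take_length] at hall ⊢
      omega
    · simpa only [sum_take_eq] using hdom.2 k
    · rw [← hp.getD_eq_overlaps, ← sum_drop_eq]
      by_cases hpi : p.getD i 0 = 0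
      · rw [hpi]
        exact hdom.getD_le_sum_drop i
      · exact hbound i (lt_lenp hp.antitone hpi)

theorem isLRWord_getD_iff :
    IsLRWord (fun i => ν.getD i 0) w ↔ IsYam w ∧ HasContent w ν :=
  ⟨fun h => ⟨h.yam, h.count_succ, h.count_zero⟩, fun h => ⟨h.1, h.2.1, h.2.2⟩⟩

end

/-- Theorem `ThmNec`: for a partition `a` with parts ≥ 2, overlapping
partition `p`, and a partition `nu` of `|a|`, the LR coefficient `c_{R_a^p}^{nu}` is positive
iff `nu ∈ [a, (|a|-p₁, p₁)]` and `ν_i ≤ Σ_{q=i}^{ℓ(a)} a_q − p_i` for all `1 ≤ i ≤ ℓ(p)`. -/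
theorem positivity_of_monotone_ribbon_LR_coefficient
    (a p nu : List ℕ) (ha : IsPartition a) (h2 : PartsGE a 2)
    (hp : IsOverlapSeq a p) (hnu : IsPartition nu) (hsum : nu.sum = a.sum) :
    InSupport a p nu ↔
      (InInterval a p nu ∧
        ∀ i, i < lenp p → nu.getD i 0 + p.getD i 0 ≤ (a.drop i).sum) := by
  have hword : InSupport a p nu ↔ ∃ w, RibbonRows (fun i => a.getD i 0) (ovOf p) a.length w ∧
      IsLRWord (fun i => nu.getD i 0) w :=
    exists_congr fun w => and_congr (isRibbonWord_iff ha.2) isLRWord_getD_iff.symm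
  have hrows : ∀ i < a.length, 2 ≤ a.getD i 0 := fun i hi => by
    rw [List.getD_eq_getElem _ _ hi]
    exact h2 _ (List.getElem_mem hi)
  rw [hword, exists_ribbonRows_iff_isAdmissible (antitone_getD ha.1) hrows,
    isAdmissible_iff hp hnu.1 hsum]

end RibbonSupport
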